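/- For every η > 0 there exist κ > 0 and a constant C = C(η) such that the following holds. For every prime p, every non-trivial multiplicative character χ modulo p, and every real x with p^{1/8 + η} ≤ x < p, one has |∑_{p₁, p₂, p₃, p₄ ≤ x} (p₁/p₃)·(p₂/p₄)·χ(p₁·p₂ − p₃·p₄)| ≤ C·x⁴·p^{−κ}, where the sum runs over quadruples of primes p₁, p₂, p₃, p₄ each at most x and (a/q) denotes the Legendre symbol of a modulo the odd prime q. -/

import Mathlib

open Finset

open Classical in
/-- The Legendre symbol `(a/q)` for a prime `q`, with the convention `(a/2) = 1`. -/
noncomputable def legSym (q : ℕ) (a : ℤ) : ℤ :=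
  if q = 2 then 1
  else if (q : ℤ) ∣ a then 0
  else if ∃ y : ℤ, y ^ 2 ≡ a [ZMOD (q : ℤ)] then 1 else -1


/-- real version -/
noncomputable def LL (q a : ℕ) : ℝ := (legSym q (a : ℤ) : ℝ)

lemma legSym_eq_qc (q : ℕ) [Fact q.Prime] (hq : q ≠ 2) (a : ℤ) :
    legSym q a = quadraticChar (ZMod q) (a : ZMod q) := by
  rw [quadraticChar_apply]
  unfold legSym quadraticCharFun
  rw [if_neg hq]
  have h1 : (q : ℤ) ∣ a ↔ (a : ZMod q) = 0 := (ZMod.intCast_zmod_eq_zero_iff_dvd a q).symm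
  have h2 : (∃ y : ℤ, y ^ 2 ≡ a [ZMOD (q : ℤ)]) ↔ IsSquare (a : ZMod q) := by
    constructor
    · rintro ⟨y, hy⟩
      refine ⟨(y : ZMod q), ?_⟩
      have := (ZMod.intCast_eq_intCast_iff _ _ q).2 hy
      push_cast at this
      rw [← this]; ring
    · rintro ⟨r, hr⟩
      obtain ⟨y, rfl⟩ := ZMod.intCast_surjective r
      refine ⟨y, (ZMod.intCast_eq_intCast_iff _ _ q).1 ?_⟩
      push_cast
      rw [hr]; ring
  simp only [h1, h2]

lemma LL_two (a : ℕ) : LL 2 a = 1 := by simp [LL, legSym]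

lemma LL_abs (q a : ℕ) : |LL q a| ≤ 1 := by
  unfold LL legSym
  split_ifs <;> simp

lemma LL_eq (q : ℕ) [Fact q.Prime] (hq : q ≠ 2) (a : ℕ) :
    LL q a = ((quadraticChar (ZMod q) (a : ZMod q) : ℤ) : ℝ) := by
  unfold LL
  rw [legSym_eq_qc q hq]; simp

lemma LL_mul (q : ℕ) (hq : q.Prime) (a b : ℕ) : LL q (a * b) = LL q a * LL q b := by
  by_cases h : q = 2
  · subst h; simp [LL_two]
  · have := Fact.mk hq
    rw [LL_eq q h, LL_eq q h, LL_eq q h, Nat.cast_mul, map_mul, Int.cast_mul]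

lemma LL_mod (q : ℕ) (hq : q.Prime) (a : ℕ) : LL q (a % q) = LL q a := by
  by_cases h : q = 2
  · subst h; simp [LL_two]
  · have := Fact.mk hq
    simp [LL_eq q h]

lemma LL_sum (q : ℕ) (hq : q.Prime) (h : q ≠ 2) : ∑ a ∈ range q, LL q a = 0 := by
  have := Fact.mk hq
  have h1 : ∑ a : ZMod q, quadraticChar (ZMod q) a = 0 :=
    quadraticChar_sum_zero (by rwa [ZMod.ringChar_zmod_n])
  have h2 : ∑ a ∈ range q, LL q a =
      ∑ a : ZMod q, ((quadraticChar (ZMod q) a : ℤ) : ℝ) := by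
    refine Finset.sum_nbij' (fun a => (a : ZMod q)) (fun z => z.val) ?_ ?_ ?_ ?_ ?_
    · simp
    · intro z _; simp [ZMod.val_lt]
    · intro a ha; simp at ha; simp [ZMod.val_natCast, Nat.mod_eq_of_lt ha]
    · intro z _; simp
    · intro a _; exact LL_eq q h a
  rw [h2]; exact_mod_cast h1

lemma LL_pair_sum (q r : ℕ) (hq : q.Prime) (hr : r.Prime) (h : q ≠ r) :
    ∑ A ∈ range (q * r), LL q A * LL r A = 0 := by
  have hc : Nat.Coprime q r := (Nat.coprime_primes hq hr).2 h
  have h1 : ∑ A ∈ range (q * r), LL q A * LL r A =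
      ∑ z ∈ range q ×ˢ range r, LL q z.1 * LL r z.2 := by
    refine Finset.sum_nbij (fun A => (A % q, A % r)) ?_ ?_ ?_ ?_
    · intro A _; simp [Nat.mod_lt _ hq.pos, Nat.mod_lt _ hr.pos]
    · intro A hA B hB hAB
      simp at hA hB hAB
      have : A ≡ B [MOD q * r] := (Nat.modEq_and_modEq_iff_modEq_mul hc).1 hAB
      exact Nat.ModEq.eq_of_lt_of_lt this hA hB
    · rintro ⟨i, j⟩ hz
      simp at hz
      refine ⟨(Nat.chineseRemainder hc i j : ℕ), ?_, ?_⟩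
      · simpa using Nat.chineseRemainder_lt_mul hc i j hq.ne_zero hr.ne_zero
      · obtain ⟨a, b⟩ := (Nat.chineseRemainder hc i j).2
        simp only [Prod.mk.injEq]
        exact ⟨by rw [a, Nat.mod_eq_of_lt hz.1], by rw [b, Nat.mod_eq_of_lt hz.2]⟩
    · intro A _; simp only [LL_mod q hq, LL_mod r hr]
  rw [h1, Finset.sum_product, ← Finset.sum_mul_sum]
  by_cases h2 : q = 2
  · rw [LL_sum r hr (by rintro rfl; exact h h2), mul_zero]
  · rw [LL_sum q hq h2, zero_mul]

lemma period_sum (g : ℕ → ℝ) (m : ℕ) (hm : 0 < m) (hp : ∀ A, g (m + A) = g A)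
    (hb : ∀ A, |g A| ≤ 1) (h0 : ∑ A ∈ range m, g A = 0) (M : ℕ) :
    |∑ A ∈ range M, g A| ≤ m := by
  induction M using Nat.strong_induction_on with
  | _ M ih =>
    by_cases h : M < m
    · calc |∑ A ∈ range M, g A| ≤ ∑ A ∈ range M, |g A| := abs_sum_le_sum_abs _ _
        _ ≤ ∑ A ∈ range M, 1 := sum_le_sum fun A _ => hb A
        _ = M := by simp
        _ ≤ m := by exact_mod_cast h.le
    · obtain ⟨k, rfl⟩ := Nat.exists_eq_add_of_le (not_lt.1 h)
      rw [Finset.sum_range_add, h0, zero_add]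
      simp only [hp]
      exact ih k (by omega)

lemma LL_pair_bound (q r : ℕ) (hq : q.Prime) (hr : r.Prime) (h : q ≠ r) (M : ℕ) :
    |∑ A ∈ range M, LL q A * LL r A| ≤ (q : ℝ) * r := by
  have := period_sum (fun A => LL q A * LL r A) (q * r) (Nat.mul_pos hq.pos hr.pos) ?_ ?_
    (LL_pair_sum q r hq hr h) M
  · simpa using this
  · intro A
    rw [← LL_mod q hq (q * r + A), ← LL_mod r hr (q * r + A)]
    simp only [Nat.mul_add_mod, Nat.mul_add_mod', LL_mod q hq, LL_mod r hr]
  · intro A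
    simp only [abs_mul]
    exact mul_le_one₀ (LL_abs _ _) (abs_nonneg _) (LL_abs _ _)

/-- primes up to N -/
def PP (N : ℕ) : Finset ℕ := (Icc 1 N).filter Nat.Prime

lemma mem_PP {N q : ℕ} : q ∈ PP N ↔ q.Prime ∧ q ≤ N := by
  simp only [PP, mem_filter, mem_Icc]
  constructor
  · rintro ⟨⟨_, h⟩, h'⟩; exact ⟨h', h⟩
  · rintro ⟨h', h⟩; exact ⟨⟨h'.one_lt.le, h⟩, h'⟩

lemma card_PP (N : ℕ) : ((PP N).card : ℝ) ≤ N := by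
  have : (PP N).card ≤ (Icc 1 N).card := card_filter_le _ _
  simp at this
  exact_mod_cast this

lemma Y_moment (N : ℕ) (hN : 1 ≤ N) (w : ℕ → ℝ) (hw : ∀ q, |w q| ≤ 1) :
    ∑ A ∈ range (N ^ 3 + 1), (∑ q ∈ PP N, w q * LL q A) ^ 2 ≤ 3 * (N : ℝ) ^ 4 := by
  have hN' : (1 : ℝ) ≤ N := by exact_mod_cast hN
  have e : ∑ A ∈ range (N ^ 3 + 1), (∑ q ∈ PP N, w q * LL q A) ^ 2 =
      ∑ q ∈ PP N, ∑ r ∈ PP N, w q * w r * ∑ A ∈ range (N ^ 3 + 1), LL q A * LL r A := by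
    have e1 : ∀ A, (∑ q ∈ PP N, w q * LL q A) ^ 2 =
        ∑ q ∈ PP N, ∑ r ∈ PP N, w q * LL q A * (w r * LL r A) := fun A => by
      rw [sq, Finset.sum_mul_sum]
    simp only [e1, Finset.mul_sum]
    rw [Finset.sum_comm]
    refine sum_congr rfl fun q _ => ?_
    rw [Finset.sum_comm]
    refine sum_congr rfl fun r _ => sum_congr rfl fun A _ => ?_
    ring
  rw [e]
  have hterm : ∀ q ∈ PP N, ∀ r ∈ PP N,
      w q * w r * ∑ A ∈ range (N ^ 3 + 1), LL q A * LL r A ≤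
        (if q = r then (N : ℝ) ^ 3 + 1 else 0) + N ^ 2 := by
    intro q hq r hr
    have hq' := mem_PP.1 hq
    have hr' := mem_PP.1 hr
    refine (le_abs_self _).trans ?_
    rw [abs_mul, abs_mul]
    have h1 : |w q| * |w r| ≤ 1 := mul_le_one₀ (hw q) (abs_nonneg _) (hw r)
    refine (mul_le_of_le_one_left (abs_nonneg _) h1).trans ?_
    split_ifs with h
    · have : |∑ A ∈ range (N ^ 3 + 1), LL q A * LL r A| ≤ (N : ℝ) ^ 3 + 1 := by
        calc _ ≤ ∑ A ∈ range (N ^ 3 + 1), |LL q A * LL r A| := abs_sum_le_sum_abs _ _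
          _ ≤ ∑ A ∈ range (N ^ 3 + 1), (1 : ℝ) := sum_le_sum fun A _ => by
              rw [abs_mul]
              exact mul_le_one₀ (LL_abs _ _) (abs_nonneg _) (LL_abs _ _)
          _ = _ := by simp
      have : (0 : ℝ) ≤ (N : ℝ) ^ 2 := by positivity
      linarith
    · refine (LL_pair_bound q r hq'.1 hr'.1 h _).trans ?_
      have a1 : (q : ℝ) ≤ N := by exact_mod_cast hq'.2
      have a2 : (r : ℝ) ≤ N := by exact_mod_cast hr'.2
      have a3 : (0 : ℝ) ≤ r := by positivity
      nlinarith
  calc _ ≤ ∑ q ∈ PP N, ∑ r ∈ PP N, ((if q = r then (N : ℝ) ^ 3 + 1 else 0) + (N : ℝ) ^ 2) :=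
        sum_le_sum fun q hq => sum_le_sum fun r hr => hterm q hq r hr
    _ = (PP N).card * ((N : ℝ) ^ 3 + 1) + (PP N).card * ((PP N).card * (N : ℝ) ^ 2) := by
        simp only [Finset.sum_add_distrib, Finset.sum_ite_eq, Finset.sum_const, nsmul_eq_mul]
        congr 1
        rw [Finset.sum_ite_mem]
        simp
        ring
    _ ≤ N * (N ^ 3 + 1) + N * (N * (N : ℝ) ^ 2) := by
        have := card_PP N
        gcongr
    _ ≤ 3 * (N : ℝ) ^ 4 := by
        have : (N : ℝ) ≤ N ^ 4 := le_self_pow₀ hN' (by norm_num)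
        nlinarith

lemma triple_bound (N : ℕ) (F : ℕ → ℝ) (hF : ∀ A, 0 ≤ F A) :
    ∑ t ∈ PP N ×ˢ PP N ×ˢ PP N, F (t.1 * (t.2.1 * t.2.2)) ≤
      9 * ∑ A ∈ range (N ^ 3 + 1), F A := by
  rw [← Finset.sum_fiberwise_of_maps_to (t := range (N ^ 3 + 1))
    (g := fun t : ℕ × ℕ × ℕ => t.1 * (t.2.1 * t.2.2)), Finset.mul_sum]
  · refine sum_le_sum fun A _ => ?_
    rw [Finset.sum_congr rfl (g := fun _ => F A)
      (fun t ht => by rw [(mem_filter.1 ht).2]), sum_const, nsmul_eq_mul]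
    refine mul_le_mul_of_nonneg_right ?_ (hF A)
    set s := {t ∈ PP N ×ˢ PP N ×ˢ PP N | t.1 * (t.2.1 * t.2.2) = A} with hs
    rcases s.eq_empty_or_nonempty with h | ⟨t, ht⟩
    · rw [h]; simp
    · have key : ∀ t ∈ s, t.1 ∈ A.primeFactors ∧ t.2.1 ∈ A.primeFactors ∧
          A.primeFactors = {t.1} ∪ ({t.2.1} ∪ {t.2.2}) ∧ t.1 * (t.2.1 * t.2.2) = A
            ∧ t.1 ≠ 0 ∧ t.2.1 ≠ 0 := by
        intro t ht
        rw [hs, mem_filter, mem_product, mem_product, mem_PP, mem_PP, mem_PP] at ht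
        obtain ⟨⟨⟨h1, _⟩, ⟨h2, _⟩, h3, _⟩, h4⟩ := ht
        have e : A.primeFactors = {t.1} ∪ ({t.2.1} ∪ {t.2.2}) := by
          rw [← h4, Nat.primeFactors_mul h1.ne_zero (mul_ne_zero h2.ne_zero h3.ne_zero),
            Nat.primeFactors_mul h2.ne_zero h3.ne_zero, h1.primeFactors, h2.primeFactors,
            h3.primeFactors]
        refine ⟨?_, ?_, e, h4, h1.ne_zero, h2.ne_zero⟩ <;> rw [e] <;> simp
      have hc : A.primeFactors.card ≤ 3 := by
        rw [(key t ht).2.2.1]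
        refine (card_union_le _ _).trans ?_
        have := card_union_le {t.2.1} {t.2.2}
        simp only [card_singleton] at *
        omega
      have h9 : s.card ≤ (A.primeFactors ×ˢ A.primeFactors).card := by
        refine card_le_card_of_injOn (fun t => (t.1, t.2.1)) ?_ ?_
        · intro t ht
          have := key t ht
          simp only [coe_product, Set.mem_prod, mem_coe]
          exact ⟨this.1, this.2.1⟩
        · rintro ⟨a, b, c⟩ h1 ⟨a', b', c'⟩ h2 h3
          have k1 := key _ h1
          have k2 := key _ h2
          simp only [Prod.mk.injEq] at h3
          obtain ⟨rfl, rfl⟩ := h3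
          have := k1.2.2.2.1.trans k2.2.2.2.1.symm
          simp only at this k1
          have := Nat.eq_of_mul_eq_mul_left (Nat.pos_of_ne_zero k1.2.2.2.2.1) this
          have := Nat.eq_of_mul_eq_mul_left (Nat.pos_of_ne_zero k1.2.2.2.2.2) this
          rw [this]
      rw [card_product] at h9
      have : s.card ≤ 9 := h9.trans (by nlinarith)
      exact_mod_cast this
  · intro t ht
    rw [mem_product, mem_product, mem_PP, mem_PP, mem_PP] at ht
    rw [mem_range, Nat.lt_succ_iff]
    calc t.1 * (t.2.1 * t.2.2) ≤ N * (N * N) := by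
          have := ht.1.2; have := ht.2.1.2; have := ht.2.2.2
          gcongr
      _ = N ^ 3 := by ring

lemma exists_sign (x : ℝ) : ∃ s : ℝ, |s| ≤ 1 ∧ |x| = s * x := by
  rcases le_total 0 x with h | h
  · exact ⟨1, by simp, by rw [abs_of_nonneg h, one_mul]⟩
  · exact ⟨-1, by simp, by rw [abs_of_nonpos h]; ring⟩

lemma cube_moment (N : ℕ) (hN : 1 ≤ N) (θ : ℕ → ℝ) (hθ : ∀ a, |θ a| ≤ 1) :
    (∑ q ∈ PP N, |∑ a ∈ PP N, θ a * LL q a| ^ 3) ^ 2 ≤ 27 * (N : ℝ) ^ 7 := by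
  choose w hw hw' using fun q => exists_sign ((∑ a ∈ PP N, θ a * LL q a) ^ 3)
  set T := PP N ×ˢ PP N ×ˢ PP N with hT
  have e : ∑ q ∈ PP N, |∑ a ∈ PP N, θ a * LL q a| ^ 3 =
      ∑ t ∈ T, θ t.1 * (θ t.2.1 * θ t.2.2) *
        ∑ q ∈ PP N, w q * LL q (t.1 * (t.2.1 * t.2.2)) := by
    have e1 : ∀ q ∈ PP N, |∑ a ∈ PP N, θ a * LL q a| ^ 3 =
        ∑ t ∈ T, θ t.1 * (θ t.2.1 * θ t.2.2) * (w q * LL q (t.1 * (t.2.1 * t.2.2))) := by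
      intro q hq
      have hq' := (mem_PP.1 hq).1
      rw [← abs_pow, hw', hT, sum_product]
      simp only [sum_product]
      rw [pow_succ', sq, Finset.sum_mul_sum, Finset.sum_mul_sum, Finset.mul_sum]
      refine sum_congr rfl fun a _ => ?_
      rw [Finset.mul_sum]
      refine sum_congr rfl fun b _ => ?_
      rw [Finset.mul_sum, Finset.mul_sum]
      refine sum_congr rfl fun c _ => ?_
      rw [LL_mul q hq', LL_mul q hq']
      ring
    rw [sum_congr rfl e1, sum_comm]
    refine sum_congr rfl fun t _ => ?_
    rw [Finset.mul_sum]
  rw [e]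
  have hcard : (T.card : ℝ) ≤ N ^ 3 := by
    rw [hT, card_product, card_product]
    push_cast
    have := card_PP N
    calc _ ≤ (N : ℝ) * (N * N) := by gcongr
      _ = _ := by ring
  calc _ ≤ (T.card : ℝ) * ∑ t ∈ T, (θ t.1 * (θ t.2.1 * θ t.2.2) *
        ∑ q ∈ PP N, w q * LL q (t.1 * (t.2.1 * t.2.2))) ^ 2 := sq_sum_le_card_mul_sum_sq
    _ ≤ (N : ℝ) ^ 3 * ∑ t ∈ T, (∑ q ∈ PP N, w q * LL q (t.1 * (t.2.1 * t.2.2))) ^ 2 := by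
        refine mul_le_mul hcard (sum_le_sum fun t _ => ?_)
          (sum_nonneg fun t _ => sq_nonneg _) (by positivity)
        rw [mul_pow]
        refine mul_le_of_le_one_left (sq_nonneg _) ?_
        rw [sq_le_one_iff_abs_le_one, abs_mul, abs_mul]
        exact mul_le_one₀ (hθ _) (by positivity) (mul_le_one₀ (hθ _) (by positivity) (hθ _))
    _ ≤ (N : ℝ) ^ 3 * (9 * (3 * (N : ℝ) ^ 4)) := by
        refine mul_le_mul_of_nonneg_left ?_ (by positivity)
        refine (triple_bound N (fun A => (∑ q ∈ PP N, w q * LL q A) ^ 2)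
          (fun A => sq_nonneg _)).trans ?_
        have := Y_moment N hN w hw
        linarith
    _ = _ := by ring

lemma BL (N : ℕ) (hN : 1 ≤ N) (c : ℕ → ℝ) (hc : ∀ q, |c q| ≤ 1) :
    (∑ a ∈ PP N, |∑ q ∈ PP N, c q * LL q a|) ^ 6 ≤ 27 * (N : ℝ) ^ 11 := by
  have hN' : (1 : ℝ) ≤ N := by exact_mod_cast hN
  choose θ hθ hθ' using fun a => exists_sign (∑ q ∈ PP N, c q * LL q a)
  set X : ℕ → ℝ := fun q => |∑ a ∈ PP N, θ a * LL q a| with hX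
  have h1 : ∑ a ∈ PP N, |∑ q ∈ PP N, c q * LL q a| ≤ ∑ q ∈ PP N, X q := by
    have : ∑ a ∈ PP N, |∑ q ∈ PP N, c q * LL q a| =
        ∑ q ∈ PP N, c q * ∑ a ∈ PP N, θ a * LL q a := by
      simp only [hθ', Finset.mul_sum]
      rw [sum_comm]
      exact sum_congr rfl fun q _ => sum_congr rfl fun a _ => by ring
    rw [this]
    refine sum_le_sum fun q _ => (le_abs_self _).trans ?_
    rw [abs_mul]
    exact mul_le_of_le_one_left (abs_nonneg _) (hc q)
  have h2 : (∑ q ∈ PP N, X q) ^ 3 ≤ (N : ℝ) ^ 2 * ∑ q ∈ PP N, X q ^ 3 := by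
    have h := pow_sum_div_card_le_sum_pow (s := PP N) (f := X) (fun q _ => abs_nonneg _) 2
    rcases (PP N).eq_empty_or_nonempty with h0 | h0
    · rw [h0]; simp
    · have hpos : (0 : ℝ) < ((PP N).card : ℝ) ^ 2 := by
        have := h0.card_pos
        positivity
      rw [div_le_iff₀ hpos] at h
      refine h.trans ?_
      rw [mul_comm]
      have := card_PP N
      have h3 : 0 ≤ ∑ q ∈ PP N, X q ^ 3 := sum_nonneg fun q _ => by positivity
      gcongr
  have h0 : 0 ≤ ∑ a ∈ PP N, |∑ q ∈ PP N, c q * LL q a| := sum_nonneg fun _ _ => abs_nonneg _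
  have hX0 : 0 ≤ ∑ q ∈ PP N, X q := h0.trans h1
  calc _ ≤ (∑ q ∈ PP N, X q) ^ 6 := pow_le_pow_left₀ h0 h1 6
    _ = ((∑ q ∈ PP N, X q) ^ 3) ^ 2 := by ring
    _ ≤ ((N : ℝ) ^ 2 * ∑ q ∈ PP N, X q ^ 3) ^ 2 := pow_le_pow_left₀ (by positivity) h2 2
    _ = (N : ℝ) ^ 4 * (∑ q ∈ PP N, X q ^ 3) ^ 2 := by ring
    _ ≤ (N : ℝ) ^ 4 * (27 * (N : ℝ) ^ 7) := by
        have := cube_moment N hN θ hθ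
        gcongr
    _ = _ := by ring

lemma CS {ι : Type} (T : Finset ι) (R : Finset ℤ) (r : ι → ℤ) (hr : ∀ t ∈ T, r t ∈ R)
    (u : ι → ℝ) (f : ℤ → ℂ) (hf : ∀ n, ‖f n‖ ≤ 1) :
    ‖∑ t ∈ T, (u t : ℂ) * f (r t)‖ ^ 2 ≤
      (R.card : ℝ) * ∑ t ∈ T, ∑ t' ∈ T, if r t = r t' then u t * u t' else 0 := by
  set G : ℤ → ℝ := fun j => ∑ t ∈ T with r t = j, u t with hG
  have h1 : ‖∑ t ∈ T, (u t : ℂ) * f (r t)‖ ≤ ∑ j ∈ R, |G j| := by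
    rw [← Finset.sum_fiberwise_of_maps_to hr]
    refine (norm_sum_le _ _).trans (sum_le_sum fun j _ => ?_)
    have : ∑ t ∈ T with r t = j, (u t : ℂ) * f (r t) = ((G j : ℝ) : ℂ) * f j := by
      rw [hG]
      push_cast
      rw [Finset.sum_mul]
      exact sum_congr rfl fun t ht => by rw [(mem_filter.1 ht).2]
    rw [this, norm_mul, Complex.norm_real, Real.norm_eq_abs]
    exact mul_le_of_le_one_right (abs_nonneg _) (hf j)
  have h2 : ∑ j ∈ R, |G j| ^ 2 = ∑ t ∈ T, ∑ t' ∈ T, if r t = r t' then u t * u t' else 0 := by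
    have : ∀ j ∈ R, |G j| ^ 2 = ∑ t ∈ T with r t = j, u t * G (r t) := by
      intro j _
      rw [sq_abs, sq]
      conv_lhs => rw [hG]
      simp only
      rw [Finset.sum_mul]
      exact sum_congr rfl fun t ht => by rw [(mem_filter.1 ht).2]
    rw [sum_congr rfl this, Finset.sum_fiberwise_of_maps_to hr]
    refine sum_congr rfl fun t _ => ?_
    rw [hG]
    simp only
    rw [Finset.mul_sum, Finset.sum_filter]
    refine sum_congr rfl fun t' _ => ?_
    by_cases h : r t = r t'
    · rw [if_pos h, if_pos h.symm]
    · rw [if_neg h, if_neg (Ne.symm h)]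
  calc _ ≤ (∑ j ∈ R, |G j|) ^ 2 := pow_le_pow_left₀ (norm_nonneg _) h1 2
    _ ≤ (R.card : ℝ) * ∑ j ∈ R, |G j| ^ 2 := sq_sum_le_card_mul_sum_sq
    _ = _ := by rw [h2]

lemma RC (s : Finset ℕ) (N k : ℕ) (y : ℝ) (hy : 0 < y) (hk : y ≤ k) (h1 : ∀ a ∈ s, a ≤ N)
    (h2 : ∀ a ∈ s, ∀ a' ∈ s, (k : ℤ) ∣ (a : ℤ) - a') : (s.card : ℝ) ≤ N / y + 1 := by
  have hk0 : 0 < k := by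
    have : (0 : ℝ) < k := hy.trans_le hk
    exact_mod_cast this
  have : s.card ≤ (range (N / k + 1)).card := by
    refine card_le_card_of_injOn (fun a => a / k) ?_ ?_
    · intro a ha
      simp only [coe_range, Set.mem_Iio, Nat.lt_succ_iff]
      exact Nat.div_le_div_right (h1 a ha)
    · intro a ha a' ha' h
      simp only at h
      have hm : a' % k = a % k := (Nat.modEq_iff_dvd).2 (h2 a ha a' ha')
      rw [← Nat.div_add_mod a k, ← Nat.div_add_mod a' k, h, hm]
  rw [card_range] at this
  calc (s.card : ℝ) ≤ ((N / k + 1 : ℕ) : ℝ) := by exact_mod_cast this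
    _ ≤ (N : ℝ) / k + 1 := by push_cast; gcongr; exact Nat.cast_div_le
    _ ≤ N / y + 1 := by gcongr

lemma RC2 (s : Finset (ℕ × ℕ)) (g : ℕ × ℕ → ℕ) (N k : ℕ) (y : ℝ) (hy : 0 < y) (hk : y ≤ k)
    (h1 : ∀ z ∈ s, g z ≤ N)
    (h2 : ∀ z ∈ s, ∀ z' ∈ s, (k : ℤ) ∣ (g z : ℤ) - g z')
    (h3 : ∀ z ∈ s, ∀ z' ∈ s, g z = g z' → z = z') : (s.card : ℝ) ≤ N / y + 1 := by
  rw [← card_image_of_injOn (f := g) (s := s) (fun z hz z' hz' h => h3 z hz z' hz' h)]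
  refine RC _ N k y hy hk ?_ ?_
  · intro a ha
    obtain ⟨z, hz, rfl⟩ := mem_image.1 ha
    exact h1 z hz
  · intro a ha a' ha'
    obtain ⟨z, hz, rfl⟩ := mem_image.1 ha
    obtain ⟨z', hz', rfl⟩ := mem_image.1 ha'
    exact h2 z hz z' hz'

lemma prime_dvd_of {b m : ℕ} (hb : b.Prime) (hm : m.Prime) (h : b ≠ m) {n : ℤ}
    (hd : (b : ℤ) ∣ m * n) : (b : ℤ) ∣ n := by
  have hc : IsCoprime (b : ℤ) (m : ℤ) := by
    rw [Nat.isCoprime_iff_coprime]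
    exact (Nat.coprime_primes hb hm).2 h
  exact hc.dvd_of_dvd_mul_left hd

lemma count_off (N b b' : ℕ) (hb : b.Prime) (hb' : b'.Prime) (hne : b ≠ b') (y : ℝ)
    (hy : 0 < y) (hk : y ≤ b') (n : ℤ) :
    ((((PP N ×ˢ PP N).filter fun z => (z.1 : ℤ) * b - z.2 * b' = n)).card : ℝ) ≤
      N / y + 1 := by
  refine RC2 _ Prod.fst N b' y hy hk ?_ ?_ ?_
  · intro z hz
    exact (mem_PP.1 (mem_product.1 (mem_filter.1 hz).1).1).2
  · intro z hz z' hz'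
    have e1 := (mem_filter.1 hz).2
    have e2 := (mem_filter.1 hz').2
    refine prime_dvd_of hb' hb hne.symm ⟨(z.2 : ℤ) - z'.2, ?_⟩
    linear_combination e1 - e2
  · intro z hz z' hz' h
    have e1 := (mem_filter.1 hz).2
    have e2 := (mem_filter.1 hz').2
    have hb0 : (b' : ℤ) ≠ 0 := by exact_mod_cast hb'.ne_zero
    refine Prod.ext h ?_
    rw [h] at e1
    have : (z.2 : ℤ) * b' = z'.2 * b' := by linarith
    exact_mod_cast mul_right_cancel₀ hb0 this

lemma count_diag (N b m : ℕ) (hb : b.Prime) (hm : m.Prime) (y : ℝ)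
    (hy : 0 < y) (hk : y ≤ b) (n : ℤ) :
    ((((PP N ×ˢ PP N).filter fun z => n = (z.1 : ℤ) * b - m * z.2)).card : ℝ) ≤
      N / y + 1 + if b = m then (N : ℝ) else 0 := by
  have hb0 : (b : ℤ) ≠ 0 := by exact_mod_cast hb.ne_zero
  have hm0 : (m : ℤ) ≠ 0 := by exact_mod_cast hm.ne_zero
  split_ifs with h
  · have : ((PP N ×ˢ PP N).filter fun z => n = (z.1 : ℤ) * b - m * z.2).card ≤ (PP N).card := by
      refine card_le_card_of_injOn Prod.fst ?_ ?_
      · intro z hz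
        exact (mem_product.1 (mem_filter.1 hz).1).1
      · intro z hz z' hz' h
        have e1 := (mem_filter.1 hz).2
        have e2 := (mem_filter.1 hz').2
        refine Prod.ext h ?_
        rw [h] at e1
        have : (m : ℤ) * z.2 = m * z'.2 := by linarith
        exact_mod_cast mul_left_cancel₀ hm0 this
    have h1 : (((PP N ×ˢ PP N).filter fun z => n = (z.1 : ℤ) * b - m * z.2).card : ℝ) ≤
      ((PP N).card : ℝ) := by exact_mod_cast this
    have h2 : (0 : ℝ) ≤ N / y := by positivity
    linarith [card_PP N]
  · rw [add_zero]
    refine RC2 _ Prod.snd N b y hy hk ?_ ?_ ?_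
    · intro z hz
      exact (mem_PP.1 (mem_product.1 (mem_filter.1 hz).1).2).2
    · intro z hz z' hz'
      have e1 := (mem_filter.1 hz).2
      have e2 := (mem_filter.1 hz').2
      refine prime_dvd_of hb hm h ⟨(z.1 : ℤ) - z'.1, ?_⟩
      linear_combination e1 - e2
    · intro z hz z' hz' h
      have e1 := (mem_filter.1 hz).2
      have e2 := (mem_filter.1 hz').2
      refine Prod.ext ?_ h
      rw [h] at e1
      have : (z.1 : ℤ) * b = z'.1 * b := by linarith
      exact_mod_cast mul_right_cancel₀ hb0 this

/-- second-moment piece -/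
noncomputable def EE (N m b b' : ℕ) : ℝ :=
  ∑ z ∈ PP N ×ˢ PP N, ∑ z' ∈ PP N ×ˢ PP N,
    if (z.1 : ℤ) * b - m * z.2 = (z'.1 : ℤ) * b' - m * z'.2 then
      (LL m z.1 * LL z.2 b) * (LL m z'.1 * LL z'.2 b') else 0

lemma abs_mul4 {a b c d : ℝ} (ha : |a| ≤ 1) (hb : |b| ≤ 1) (hc : |c| ≤ 1) (hd : |d| ≤ 1) :
    (a * b) * (c * d) ≤ 1 := by
  refine (le_abs_self _).trans ?_
  rw [abs_mul, abs_mul, abs_mul]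
  exact mul_le_one₀ (mul_le_one₀ ha (abs_nonneg _) hb) (by positivity)
    (mul_le_one₀ hc (abs_nonneg _) hd)

lemma EE_diag (N m b : ℕ) (hb : b.Prime) (hm : m.Prime) (y : ℝ) (hy : 0 < y) (hk : y ≤ b) :
    EE N m b b ≤ (N : ℝ) ^ 2 * (N / y + 1 + if b = m then (N : ℝ) else 0) := by
  have h0 : (0 : ℝ) ≤ N / y + 1 + if b = m then (N : ℝ) else 0 := by
    split_ifs <;> positivity
  unfold EE
  calc _ ≤ ∑ z ∈ PP N ×ˢ PP N, (N / y + 1 + if b = m then (N : ℝ) else 0) := by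
        refine sum_le_sum fun z _ => ?_
        refine le_trans ?_ (count_diag N b m hb hm y hy hk ((z.1 : ℤ) * b - m * z.2))
        rw [card_eq_sum_ones, Nat.cast_sum, sum_filter]
        refine sum_le_sum fun z' _ => ?_
        split_ifs
        · simpa using abs_mul4 (LL_abs _ _) (LL_abs _ _) (LL_abs _ _) (LL_abs _ _)
        · exact le_rfl
    _ = ((PP N).card * (PP N).card : ℝ) * (N / y + 1 + if b = m then (N : ℝ) else 0) := by
        rw [sum_const, card_product, nsmul_eq_mul]; push_cast; rfl
    _ ≤ _ := by
        have := card_PP N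
        refine mul_le_mul_of_nonneg_right ?_ h0
        rw [sq]
        gcongr

/-- inner coefficient -/
noncomputable def cc (N b' : ℕ) (h : ℤ) (d : ℕ) : ℝ :=
  ∑ d' ∈ PP N, if (d : ℤ) - d' = h then LL d' b' else 0

lemma cc_abs (N b' : ℕ) (h : ℤ) (d : ℕ) : |cc N b' h d| ≤ 1 := by
  unfold cc
  by_cases hh : ∃ e ∈ PP N, (d : ℤ) - e = h
  · obtain ⟨e, he, h1⟩ := hh
    rw [Finset.sum_eq_single_of_mem e he]
    · rw [if_pos h1]; exact LL_abs _ _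
    · intro d' _ hne
      rw [if_neg]
      intro h2
      apply hne
      omega
  · push Not at hh
    rw [Finset.sum_eq_zero]
    · simp
    · intro e he; rw [if_neg (hh e he)]

lemma EE_off (N m b b' : ℕ) (hb : b.Prime) (hb' : b'.Prime) (hne : b ≠ b') (y : ℝ)
    (hy : 0 < y) (hk : y ≤ b') (hm : m.Prime) :
    EE N m b b' ≤ ∑ h ∈ Icc (-(N : ℤ)) N,
      (N / y + 1) * |∑ d ∈ PP N, cc N b' h d * LL d b| := by
  have hm0 : (m : ℤ) ≠ 0 := by exact_mod_cast hm.ne_zero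
  have e : EE N m b b' = ∑ h ∈ Icc (-(N : ℤ)) N,
      (∑ a ∈ PP N, ∑ a' ∈ PP N, if (a : ℤ) * b - a' * b' = m * h then LL m a * LL m a' else 0) *
      (∑ d ∈ PP N, ∑ d' ∈ PP N, if (d : ℤ) - d' = h then LL d b * LL d' b' else 0) := by
    simp only [Finset.sum_mul_sum]
    unfold EE
    simp only [sum_product]
    rw [sum_comm (s := Icc (-(N : ℤ)) N)]
    refine sum_congr rfl fun a _ => ?_
    rw [sum_comm (s := Icc (-(N : ℤ)) N)]
    refine sum_congr rfl fun d hd => ?_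
    rw [sum_comm (s := Icc (-(N : ℤ)) N)]
    refine sum_congr rfl fun a' _ => ?_
    rw [sum_comm (s := Icc (-(N : ℤ)) N)]
    refine sum_congr rfl fun d' hd' => ?_
    have hd1 := (mem_PP.1 hd).2
    have hd2 := (mem_PP.1 hd').2
    have hmem : (d : ℤ) - d' ∈ Icc (-(N : ℤ)) N := by
      rw [mem_Icc]; omega
    rw [Finset.sum_eq_single_of_mem _ hmem]
    · rw [if_pos (rfl : (d : ℤ) - d' = d - d')]
      by_cases h : (a : ℤ) * b - m * d = (a' : ℤ) * b' - m * d'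
      · rw [if_pos h, if_pos (by linear_combination h)]; ring
      · rw [if_neg h, if_neg (fun h' => h (by linear_combination h')), zero_mul]
    · intro h _ hne
      rw [if_neg hne.symm, mul_zero]
  rw [e]
  refine sum_le_sum fun h _ => (le_abs_self _).trans ?_
  rw [abs_mul]
  have hD : (∑ d ∈ PP N, ∑ d' ∈ PP N, if (d : ℤ) - d' = h then LL d b * LL d' b' else 0) =
      ∑ d ∈ PP N, cc N b' h d * LL d b := by
    refine sum_congr rfl fun d _ => ?_
    unfold cc
    rw [Finset.sum_mul]
    refine sum_congr rfl fun d' _ => ?_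
    split_ifs
    · ring
    · simp
  rw [hD]
  refine mul_le_mul_of_nonneg_right ?_ (abs_nonneg _)
  refine le_trans ?_ (count_off N b b' hb hb' hne y hy hk (m * h))
  rw [← sum_product', card_eq_sum_ones, Nat.cast_sum, sum_filter]
  refine (abs_sum_le_sum_abs _ _).trans (sum_le_sum fun z _ => ?_)
  split_ifs
  · rw [abs_mul]
    simpa using mul_le_one₀ (LL_abs _ _) (abs_nonneg _) (LL_abs _ _)
  · simp

lemma E_total (N m : ℕ) (hm : m.Prime) (y B : ℝ) (hy : 0 < y) (hB0 : 0 ≤ B)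
    (hB : ∀ c : ℕ → ℝ, (∀ q, |c q| ≤ 1) → ∑ a ∈ PP N, |∑ q ∈ PP N, c q * LL q a| ≤ B) :
    ∑ b ∈ (PP N).filter (fun b : ℕ => y ≤ (b : ℝ)), ∑ b' ∈ (PP N).filter (fun b : ℕ => y ≤ (b : ℝ)),
      EE N m b b' ≤ (N : ℝ) * ((2 * N + 1) * ((N / y + 1) * B)) + (N : ℝ) ^ 3 * (N / y + 2) := by
  set Q := (PP N).filter (fun b : ℕ => y ≤ (b : ℝ)) with hQ
  have hQP : Q ⊆ PP N := filter_subset _ _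
  have hQc : (Q.card : ℝ) ≤ N :=
    le_trans (by exact_mod_cast card_le_card hQP) (card_PP N)
  have hW : (0 : ℝ) ≤ N / y + 1 := by positivity
  set O : ℕ → ℕ → ℝ := fun b b' => ∑ h ∈ Icc (-(N : ℤ)) N,
      (N / y + 1) * |∑ d ∈ PP N, cc N b' h d * LL d b| with hO
  set D : ℕ → ℝ := fun b => (N : ℝ) ^ 2 * (N / y + 1 + if b = m then (N : ℝ) else 0) with hD
  have hO0 : ∀ b b', 0 ≤ O b b' := fun b b' => sum_nonneg fun h _ => by positivity
  have h1 : ∀ b ∈ Q, ∀ b' ∈ Q, EE N m b b' ≤ O b b' + if b = b' then D b else 0 := by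
    intro b hb b' hb'
    have k1 := mem_filter.1 hb
    have k2 := mem_filter.1 hb'
    have p1 := (mem_PP.1 k1.1).1
    have p2 := (mem_PP.1 k2.1).1
    split_ifs with h
    · subst h
      have := EE_diag N m b p1 hm y hy k1.2
      have := hO0 b b
      simp only [hD]
      linarith
    · rw [add_zero]
      exact EE_off N m b b' p1 p2 h y hy k2.2 hm
  have h2 : ∑ b ∈ Q, ∑ b' ∈ Q, O b b' ≤ (N : ℝ) * ((2 * N + 1) * ((N / y + 1) * B)) := by
    rw [sum_comm]
    calc ∑ b' ∈ Q, ∑ b ∈ Q, O b b' ≤ ∑ b' ∈ Q, (2 * (N : ℝ) + 1) * ((N / y + 1) * B) := by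
          refine sum_le_sum fun b' _ => ?_
          rw [hO]
          simp only
          rw [sum_comm]
          calc _ ≤ ∑ h ∈ Icc (-(N : ℤ)) N, ((N : ℝ) / y + 1) * B := by
                refine sum_le_sum fun h _ => ?_
                rw [← Finset.mul_sum]
                refine mul_le_mul_of_nonneg_left ?_ hW
                refine le_trans ?_ (hB (cc N b' h) (cc_abs N b' h))
                exact sum_le_sum_of_subset_of_nonneg hQP fun _ _ _ => abs_nonneg _
            _ = _ := by
                rw [sum_const, nsmul_eq_mul, Int.card_Icc]
                congr 1
                have : ((N : ℤ) + 1 - -(N : ℤ)).toNat = 2 * N + 1 := by omega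
                rw [this]; push_cast; ring
      _ = (Q.card : ℝ) * ((2 * (N : ℝ) + 1) * ((N / y + 1) * B)) := by
          rw [sum_const, nsmul_eq_mul]
      _ ≤ _ := by gcongr
  have h3 : ∑ b ∈ Q, D b ≤ (N : ℝ) ^ 3 * (N / y + 2) := by
    simp only [hD]
    rw [← Finset.mul_sum, sum_add_distrib, sum_const, nsmul_eq_mul]
    have : ∑ b ∈ Q, (if b = m then (N : ℝ) else 0) ≤ N := by
      rw [sum_ite_eq']
      split_ifs
      · exact le_rfl
      · positivity
    calc _ ≤ (N : ℝ) ^ 2 * (N * (N / y + 1) + N) := by gcongr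
      _ = _ := by ring
  calc _ ≤ ∑ b ∈ Q, ∑ b' ∈ Q, (O b b' + if b = b' then D b else 0) :=
        sum_le_sum fun b hb => sum_le_sum fun b' hb' => h1 b hb b' hb'
    _ = ∑ b ∈ Q, ∑ b' ∈ Q, O b b' + ∑ b ∈ Q, D b := by
        simp only [sum_add_distrib]
        congr 1
        refine sum_congr rfl fun b hb => ?_
        rw [sum_ite_eq, if_pos hb]
    _ ≤ _ := add_le_add h2 h3

lemma S_m (N m : ℕ) (hmP : m ∈ PP N) (y B : ℝ) (hy : 0 < y) (hB0 : 0 ≤ B)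
    (hB : ∀ c : ℕ → ℝ, (∀ q, |c q| ≤ 1) → ∑ a ∈ PP N, |∑ q ∈ PP N, c q * LL q a| ≤ B)
    (f : ℤ → ℂ) (hf : ∀ n, ‖f n‖ ≤ 1) :
    ‖∑ t ∈ (PP N).filter (fun b : ℕ => y ≤ (b : ℝ)) ×ˢ (PP N ×ˢ PP N),
      ((LL m t.2.1 * LL t.2.2 t.1 : ℝ) : ℂ) * f ((t.2.1 : ℤ) * t.1 - m * t.2.2)‖ ^ 2 ≤
    (2 * (N : ℝ) ^ 2 + 1) *
      ((N : ℝ) * ((2 * N + 1) * ((N / y + 1) * B)) + (N : ℝ) ^ 3 * (N / y + 2)) := by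
  obtain ⟨hm, hmN⟩ := mem_PP.1 hmP
  set Q := (PP N).filter (fun b : ℕ => y ≤ (b : ℝ)) with hQ
  refine (CS (Q ×ˢ (PP N ×ˢ PP N)) (Icc (-((N ^ 2 : ℕ) : ℤ)) ((N ^ 2 : ℕ) : ℤ))
    (fun t => (t.2.1 : ℤ) * t.1 - m * t.2.2) ?_ (fun t => LL m t.2.1 * LL t.2.2 t.1)
    f hf).trans ?_
  · intro t ht
    rw [mem_product, mem_product] at ht
    have h1 := (mem_PP.1 (mem_filter.1 ht.1).1).2
    have h2 := (mem_PP.1 ht.2.1).2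
    have h3 := (mem_PP.1 ht.2.2).2
    have k1 : t.2.1 * t.1 ≤ N ^ 2 := by rw [sq]; exact Nat.mul_le_mul h2 h1
    have k2 : m * t.2.2 ≤ N ^ 2 := by rw [sq]; exact Nat.mul_le_mul hmN h3
    rw [mem_Icc]
    have k1' : ((t.2.1 * t.1 : ℕ) : ℤ) ≤ (N ^ 2 : ℕ) := by exact_mod_cast k1
    have k2' : ((m * t.2.2 : ℕ) : ℤ) ≤ (N ^ 2 : ℕ) := by exact_mod_cast k2
    have k3 : (0 : ℤ) ≤ ((t.2.1 * t.1 : ℕ) : ℤ) := by positivity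
    have k4 : (0 : ℤ) ≤ ((m * t.2.2 : ℕ) : ℤ) := by positivity
    rw [Nat.cast_mul] at k1' k2' k3 k4
    constructor <;> linarith
  · have hc : ((Icc (-((N ^ 2 : ℕ) : ℤ)) ((N ^ 2 : ℕ) : ℤ)).card : ℝ) = 2 * (N : ℝ) ^ 2 + 1 := by
      rw [Int.card_Icc]
      have : (((N ^ 2 : ℕ) : ℤ) + 1 - -((N ^ 2 : ℕ) : ℤ)).toNat = 2 * N ^ 2 + 1 := by omega
      rw [this]; push_cast; ring
    rw [hc]
    refine mul_le_mul_of_nonneg_left ?_ (by positivity)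
    refine le_trans (le_of_eq ?_) (E_total N m hm y B hy hB0 hB)
    rw [sum_product]
    refine sum_congr rfl fun b _ => ?_
    simp only [sum_product Q]
    rw [sum_comm]
    rfl

lemma card_small (N : ℕ) (y : ℝ) (hy : 0 ≤ y) :
    (((PP N).filter (fun b : ℕ => ¬ y ≤ (b : ℝ))).card : ℝ) ≤ y := by
  have : ((PP N).filter (fun b : ℕ => ¬ y ≤ (b : ℝ))).card ≤ (Icc 1 ⌊y⌋₊).card := by
    refine card_le_card fun b hb => ?_
    have h := mem_filter.1 hb
    rw [mem_Icc]
    exact ⟨(mem_PP.1 h.1).1.one_lt.le, Nat.le_floor (not_le.1 h.2).le⟩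
  rw [Nat.card_Icc, Nat.add_sub_cancel] at this
  exact le_trans (by exact_mod_cast this) (Nat.floor_le hy)

lemma S_bound (N : ℕ) (hN : 1 ≤ N) (t : ℝ) (ht : 1 ≤ t) (htN : t ^ 24 = N)
    (f : ℤ → ℂ) (hf : ∀ n, ‖f n‖ ≤ 1) :
    ‖∑ p₁ ∈ PP N, ∑ p₂ ∈ PP N, ∑ p₃ ∈ PP N, ∑ p₄ ∈ PP N,
      ((LL p₃ p₁ * LL p₄ p₂ : ℝ) : ℂ) * f ((p₁ : ℤ) * p₂ - p₃ * p₄)‖ ≤ 8 * t ^ 95 := by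
  set y : ℝ := t ^ 22 with hy
  have hy0 : 0 < y := by positivity
  have ht0 : 0 < t := by linarith
  set Q := (PP N).filter (fun b : ℕ => y ≤ (b : ℝ)) with hQ
  set Q' := (PP N).filter (fun b : ℕ => ¬ y ≤ (b : ℝ)) with hQ'
  set F : ℕ → ℕ × ℕ × ℕ → ℂ := fun m t =>
    ((LL m t.2.1 * LL t.2.2 t.1 : ℝ) : ℂ) * f ((t.2.1 : ℤ) * t.1 - m * t.2.2) with hF
  have hF1 : ∀ m t, ‖F m t‖ ≤ 1 := by
    intro m t
    rw [hF]
    simp only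
    rw [norm_mul, Complex.norm_real, Real.norm_eq_abs, abs_mul]
    exact mul_le_one₀ (mul_le_one₀ (LL_abs _ _) (abs_nonneg _) (LL_abs _ _))
      (norm_nonneg _) (hf _)
  have e : ∑ p₁ ∈ PP N, ∑ p₂ ∈ PP N, ∑ p₃ ∈ PP N, ∑ p₄ ∈ PP N,
      ((LL p₃ p₁ * LL p₄ p₂ : ℝ) : ℂ) * f ((p₁ : ℤ) * p₂ - p₃ * p₄) =
      ∑ m ∈ PP N, (∑ t ∈ Q ×ˢ (PP N ×ˢ PP N), F m t + ∑ t ∈ Q' ×ˢ (PP N ×ˢ PP N), F m t) := by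
    have : ∀ m ∈ PP N, (∑ t ∈ Q ×ˢ (PP N ×ˢ PP N), F m t +
        ∑ t ∈ Q' ×ˢ (PP N ×ˢ PP N), F m t) =
        ∑ a ∈ PP N, ∑ b ∈ PP N, ∑ d ∈ PP N, F m (b, a, d) := by
      intro m _
      rw [sum_product, sum_product, sum_filter_add_sum_filter_not]
      simp only [sum_product]
      rw [sum_comm]
    rw [sum_congr rfl this]
    conv_rhs => rw [sum_comm]
    refine sum_congr rfl fun a _ => ?_
    conv_rhs => rw [sum_comm]
  rw [e]
  have hB : ∀ c : ℕ → ℝ, (∀ q, |c q| ≤ 1) →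
      ∑ a ∈ PP N, |∑ q ∈ PP N, c q * LL q a| ≤ 2 * t ^ 44 := by
    intro c hc
    have h := BL N hN c hc
    rw [← htN] at h
    refine le_of_pow_le_pow_left₀ (n := 6) (by norm_num) (by positivity) (h.trans ?_)
    have e1 : (t ^ 24) ^ 11 = t ^ 264 := by ring
    have e2 : (2 * t ^ 44) ^ 6 = 64 * t ^ 264 := by ring
    rw [e1, e2]
    have : 0 ≤ t ^ 264 := by positivity
    linarith
  have hbig : ∀ m ∈ PP N, ‖∑ t ∈ Q ×ˢ (PP N ×ˢ PP N), F m t‖ ≤ 7 * t ^ 71 := by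
    intro m hm
    have h := S_m N m hm y (2 * t ^ 44) hy0 (by positivity) hB f hf
    refine le_of_pow_le_pow_left₀ (n := 2) (by norm_num) (by positivity) (h.trans ?_)
    rw [← htN]
    have hd : t ^ 24 / y = t ^ 2 := by
      rw [hy, div_eq_iff (by positivity)]; ring
    rw [hd]
    have a1 : (1 : ℝ) ≤ t ^ 48 := one_le_pow₀ ht
    have a2 : (1 : ℝ) ≤ t ^ 24 := one_le_pow₀ ht
    have a3 : (1 : ℝ) ≤ t ^ 2 := one_le_pow₀ ht
    have a4 : t ^ 74 ≤ t ^ 94 := pow_le_pow_right₀ ht (by norm_num)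
    calc _ ≤ (3 * t ^ 48) * (t ^ 24 * ((3 * t ^ 24) * ((2 * t ^ 2) * (2 * t ^ 44))) +
          (t ^ 24) ^ 3 * (3 * t ^ 2)) := by
          gcongr
          · have e5 : (t ^ 24) ^ 2 = t ^ 48 := by ring
            rw [e5]; linarith
          · linarith
          · linarith
          · linarith
      _ = 36 * t ^ 142 + 9 * (t ^ 48 * t ^ 74) := by ring
      _ ≤ 36 * t ^ 142 + 9 * (t ^ 48 * t ^ 94) := by gcongr
      _ = 45 * t ^ 142 := by ring
      _ ≤ (7 * t ^ 71) ^ 2 := by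
          have : 0 ≤ t ^ 142 := by positivity
          have e3 : (7 * t ^ 71) ^ 2 = 49 * t ^ 142 := by ring
          rw [e3]; linarith
  have hsmall : ∀ m ∈ PP N, ‖∑ t ∈ Q' ×ˢ (PP N ×ˢ PP N), F m t‖ ≤ t ^ 71 := by
    intro m _
    calc _ ≤ ∑ t ∈ Q' ×ˢ (PP N ×ˢ PP N), (1 : ℝ) :=
          norm_sum_le_of_le _ fun t _ => hF1 m t
      _ = (Q'.card : ℝ) * ((PP N).card * (PP N).card) := by
          rw [sum_const, nsmul_eq_mul, mul_one, card_product, card_product]; push_cast; rfl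
      _ ≤ y * (N * N) := by
          have := card_PP N
          have := card_small N y hy0.le
          gcongr
      _ = t ^ 70 := by rw [← htN, hy]; ring
      _ ≤ t ^ 71 := pow_le_pow_right₀ ht (by norm_num)
  calc _ ≤ ∑ m ∈ PP N, 8 * t ^ 71 := by
        refine norm_sum_le_of_le _ fun m hm => (norm_add_le _ _).trans ?_
        linarith [hbig m hm, hsmall m hm]
    _ = ((PP N).card : ℝ) * (8 * t ^ 71) := by rw [sum_const, nsmul_eq_mul]
    _ ≤ (N : ℝ) * (8 * t ^ 71) := by
        have := card_PP N
        gcongr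
    _ = 8 * t ^ 95 := by rw [← htN]; ring

/-- The bound on the sum `W(x)` over quadruples of primes with Legendre symbol weights. -/
theorem prime_quadruple_sum (η : ℝ) (hη : 0 < η) :
    ∃ κ : ℝ, 0 < κ ∧ ∃ C : ℝ, 0 < C ∧ ∀ (p : ℕ), p.Prime →
      ∀ (χ : MulChar (ZMod p) ℂ), χ ≠ 1 →
      ∀ (x : ℝ), (p : ℝ) ^ ((1 : ℝ) / 8 + η) ≤ x → x < (p : ℝ) →
      ‖∑ p₁ ∈ (Icc 1 ⌊x⌋₊).filter Nat.Prime, ∑ p₂ ∈ (Icc 1 ⌊x⌋₊).filter Nat.Prime,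
        ∑ p₃ ∈ (Icc 1 ⌊x⌋₊).filter Nat.Prime, ∑ p₄ ∈ (Icc 1 ⌊x⌋₊).filter Nat.Prime,
          ((legSym p₃ (p₁ : ℤ) : ℂ) * (legSym p₄ (p₂ : ℤ) : ℂ)) *
            χ (((p₁ : ℤ) * p₂ - (p₃ : ℤ) * p₄ : ℤ) : ZMod p)‖ ≤
        C * x ^ 4 * (p : ℝ) ^ (-κ) := by
  refine ⟨1 / 192, by norm_num, 8, by norm_num, ?_⟩
  intro p hp χ _ x hx _
  have hp1 : (1 : ℝ) ≤ p := by exact_mod_cast hp.one_lt.le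
  have hp0 : (0 : ℝ) < p := by linarith
  have hx8 : (p : ℝ) ^ ((1 : ℝ) / 8) ≤ x :=
    (Real.rpow_le_rpow_of_exponent_le hp1 (by linarith)).trans hx
  have hx1 : 1 ≤ x := (Real.one_le_rpow hp1 (by norm_num)).trans hx8
  have hx0 : 0 < x := by linarith
  set N := ⌊x⌋₊ with hN
  have hN1 : 1 ≤ N := Nat.le_floor (by simpa using hx1)
  have hN1' : (1 : ℝ) ≤ N := by exact_mod_cast hN1
  have hNx : (N : ℝ) ≤ x := Nat.floor_le hx0.le
  set t : ℝ := (N : ℝ) ^ ((1 : ℝ) / 24) with ht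
  have ht1 : 1 ≤ t := Real.one_le_rpow hN1' (by norm_num)
  have htN : t ^ 24 = N := by
    rw [ht, ← Real.rpow_natCast, ← Real.rpow_mul (by positivity)]
    norm_num
  have hmain := S_bound N hN1 t ht1 htN (fun n => χ ((n : ℤ) : ZMod p))
    (fun n => DirichletCharacter.norm_le_one χ _)
  have hfin : t ^ 95 ≤ x ^ 4 * (p : ℝ) ^ (-(1 / 192 : ℝ)) := by
    have h1 : t ≤ x ^ ((1 : ℝ) / 24) := Real.rpow_le_rpow (by positivity) hNx (by norm_num)
    have h2 : (p : ℝ) ^ ((1 : ℝ) / 192) ≤ x ^ ((1 : ℝ) / 24) := by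
      calc (p : ℝ) ^ ((1 : ℝ) / 192) = ((p : ℝ) ^ ((1 : ℝ) / 8)) ^ ((1 : ℝ) / 24) := by
            rw [← Real.rpow_mul hp0.le]; norm_num
        _ ≤ _ := Real.rpow_le_rpow (by positivity) hx8 (by norm_num)
    set s : ℝ := x ^ ((1 : ℝ) / 24) with hs
    have hs96 : x ^ 4 = s ^ 95 * s := by
      rw [← pow_succ, hs, ← Real.rpow_natCast, ← Real.rpow_natCast, ← Real.rpow_mul hx0.le]
      norm_num
    have hpp : 0 < (p : ℝ) ^ ((1 : ℝ) / 192) := by positivity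
    rw [Real.rpow_neg hp0.le, ← div_eq_mul_inv, le_div_iff₀ hpp, hs96]
    have : 0 < t := by linarith
    gcongr
  calc _ ≤ 8 * t ^ 95 := by
        refine le_trans (le_of_eq ?_) hmain
        congr 1
        refine sum_congr rfl fun a _ => sum_congr rfl fun b _ => sum_congr rfl fun c _ =>
          sum_congr rfl fun d _ => ?_
        simp [LL]
    _ ≤ _ := by rw [mul_assoc]; gcongr
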